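/- arXiv:2201.04385 — 2 statements merged into one kernel-verified Lean document; each statement's English description precedes it below -/
import Mathlib

section
/- Let φ be a harmonic morphism between metric graphs Γ and Γ' given by a morphism of loopless models φ: (G, ℓ) → (G', ℓ'). Then the canonical divisors are related by K_Γ = φ*(K_{Γ'}) + R_φ, where R_φ = Σ_{v ∈ V(G)} ( 2(M_φ(v) − 1) − Σ_{e ∈ E_v(G)} (U_φ(e) − 1) )·(v). -/
/-!
At a vertex `v` the claimed identity rearranges to `∑_{e ∋ v} U e = M v * val (fV v)`. This is a
double count: an edge at `v` contracted to a vertex has slope `0`, every other edge at `v` maps to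
exactly one edge at `fV v`, and by harmonicity the slopes over each edge at `fV v` add up to `M v`
(`sum_slopes_eq_mul_valency`).
-/

open scoped Classical

/-- The local degree formula `∑_{e ∋ v} U e = M v * val (fV v)`, obtained by grouping the edges
at `v` according to their image. -/
theorem sum_slopes_eq_mul_valency
    {V E V' E' : Type} [Fintype E] [Fintype E']
    (ends : E → Sym2 V) (ends' : E' → Sym2 V')
    (fV : V → V') (fE : E → E' ⊕ V')
    (hmorE : ∀ e e', fE e = Sum.inl e' → ends' e' = (ends e).map fV)
    (U : E → ℕ)
    (hU2 : ∀ e v', fE e = Sum.inr v' → U e = 0)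
    (v : V) (m : ℕ)
    (hharm : ∀ e', fV v ∈ ends' e' →
      (∑ e ∈ Finset.univ.filter (fun e => v ∈ ends e ∧ fE e = Sum.inl e'), U e) = m) :
    ∑ e ∈ Finset.univ.filter (fun e => v ∈ ends e), U e =
      m * (Finset.univ.filter (fun e' => fV v ∈ ends' e')).card := by
  have hfiber : ∑ e' ∈ Finset.univ.filter (fun e' => fV v ∈ ends' e'),
      ∑ e ∈ Finset.univ.filter (fun e => v ∈ ends e ∧ fE e = Sum.inl e'), U e =
      m * (Finset.univ.filter (fun e' => fV v ∈ ends' e')).card := by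
    rw [Finset.sum_congr rfl fun e' he' => hharm e' (Finset.mem_filter.1 he').2,
      Finset.sum_const, smul_eq_mul, mul_comm]
  rw [← hfiber]
  simp only [← Finset.filter_filter, Finset.sum_filter (fun e => fE e = _)]
  rw [Finset.sum_comm]
  refine Finset.sum_congr rfl fun e he => ?_
  have hv : v ∈ ends e := (Finset.mem_filter.1 he).2
  rcases hfe : fE e with e₀ | v'
  · have hmem : fV v ∈ ends' e₀ := by
      rw [hmorE e e₀ hfe]
      exact Sym2.mem_map.2 ⟨v, hv, rfl⟩
    simp [Finset.sum_ite_eq, hmem]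
  · simp [hU2 e v' hfe]

/-- **Riemann–Hurwitz for metric graphs, divisor form.**  For a harmonic morphism
`φ : Γ → Γ'` of metric graphs given by a morphism of loopless models with slopes `U`
and multiplicities `M`: `K_Γ = φ*(K_{Γ'}) + R_φ`, where all three divisors are
supported on the vertices, `K_Γ(v) = val v − 2`, `(φ* K_{Γ'})(v) = M v (val (φ v) − 2)`
and `R_φ(v) = 2(M v − 1) − Σ_{e ∈ E_v} (U e − 1)`. -/
theorem riemann_hurwitz_divisor_metric_graphs
    (V E V' E' : Type) [Fintype V] [Fintype E] [Fintype V'] [Fintype E']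
    (ends : E → Sym2 V) (ends' : E' → Sym2 V')
    (len : E → ℝ) (len' : E' → ℝ)
    (hlen : ∀ e, 0 < len e) (hlen' : ∀ e', 0 < len' e')
    (hloopless : ∀ e, ¬ (ends e).IsDiag)
    (hloopless' : ∀ e', ¬ (ends' e').IsDiag)
    (hconn : (SimpleGraph.fromRel (fun u v => ∃ e, ends e = s(u, v))).Connected)
    (hconn' : (SimpleGraph.fromRel (fun u v => ∃ e', ends' e' = s(u, v))).Connected)
    (fV : V → V') (fE : E → E' ⊕ V')
    (hmorE : ∀ e e', fE e = Sum.inl e' → ends' e' = (ends e).map fV)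
    (hmorV : ∀ e v', fE e = Sum.inr v' → (ends e).map fV = s(v', v'))
    (U : E → ℕ)
    (hU1 : ∀ e e', fE e = Sum.inl e' → (U e : ℝ) = len' e' / len e)
    (hU2 : ∀ e v', fE e = Sum.inr v' → U e = 0)
    (M : V → ℕ)
    (hharm : ∀ v e', fV v ∈ ends' e' →
      (∑ e ∈ Finset.univ.filter (fun e => v ∈ ends e ∧ fE e = Sum.inl e'), U e) = M v)
    (d : ℕ)
    (hdeg : ∀ e', (∑ e ∈ Finset.univ.filter (fun e => fE e = Sum.inl e'), U e) = d)
    (hd0 : IsEmpty E' → d = 0)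
    :
    (fun v : V => (Nat.card {e : E // v ∈ ends e} : ℤ) - 2) =
      (fun v : V =>
        (M v : ℤ) * ((Nat.card {e' : E' // fV v ∈ ends' e'} : ℤ) - 2)
          + (2 * ((M v : ℤ) - 1)
            - ∑ e ∈ Finset.univ.filter (fun e => v ∈ ends e), ((U e : ℤ) - 1))) := by
  funext v
  have hloc := sum_slopes_eq_mul_valency ends ends' fV fE hmorE U hU2 v (M v) (hharm v)
  have hlocZ : ∑ e ∈ Finset.univ.filter (fun e => v ∈ ends e), (U e : ℤ) =
      (M v : ℤ) * (Finset.univ.filter (fun e' => fV v ∈ ends' e')).card := by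
    exact_mod_cast hloc
  rw [Nat.card_eq_fintype_card, Nat.card_eq_fintype_card, Fintype.card_subtype,
    Fintype.card_subtype, Finset.sum_sub_distrib, hlocZ, Finset.sum_const, nsmul_eq_mul]
  ring
end

section
/- Let (Γ, w) = (G, w, ℓ) and (Γ', w') = (G', w', ℓ') be loopless vertex-weighted metric graphs and let φ: (Γ, w) → (Γ', w') be a pseudo-harmonic morphism with loopless models (G, ℓ) and (G', ℓ'). Then the canonical divisors are related by K_{(Γ,w)} = φ*(K_{(Γ',w')}) + R_φ, where R_φ = Σ_{v ∈ V(G)} ( 2(M_φ(v) − 1 + w(v) − M_φ(v)·w'(φ(v))) − Σ_{e ∈ E_v(G)} (U_φ(e) − 1) )·(v). -/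
open scoped Classical

/-!
After expanding, the weights cancel and the identity at a vertex `v` says that the slopes of the
edges at `v` sum to `M v` times the valence of `fV v`. Group these edges by their image: contracted
edges have slope zero, every other edge at `v` maps to an edge at `fV v`, and by pseudo-harmonicity
each edge at `fV v` receives total slope `M v`. This is `sum_slope_eq_mul_card`.
-/

/-- The slopes at `v` sum to `M v` times the valence of `fV v`: `hharm` summed over the edges at
`fV v`. -/
theorem sum_slope_eq_mul_card {V E V' E' : Type} [Fintype E] [Fintype E']
    (ends : E → Sym2 V) (ends' : E' → Sym2 V') (fV : V → V') (fE : E → E' ⊕ V')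
    (hmorE : ∀ e e', fE e = Sum.inl e' → ends' e' = (ends e).map fV)
    (U : E → ℕ) (hU2 : ∀ e v', fE e = Sum.inr v' → U e = 0) (M : V → ℕ)
    (hharm : ∀ v e', fV v ∈ ends' e' →
      (∑ e ∈ Finset.univ.filter (fun e => v ∈ ends e ∧ fE e = Sum.inl e'), U e) = M v)
    (v : V) :
    ∑ e ∈ Finset.univ.filter (fun e => v ∈ ends e), U e =
      M v * Nat.card {e' : E' // fV v ∈ ends' e'} := by
  have hsum : ∑ e' ∈ Finset.univ.filter (fun e' => fV v ∈ ends' e'),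
      (∑ e ∈ Finset.univ.filter (fun e => v ∈ ends e ∧ fE e = Sum.inl e'), U e) =
      M v * Nat.card {e' : E' // fV v ∈ ends' e'} := by
    rw [Finset.sum_congr rfl (fun e' he' => hharm v e' (Finset.mem_filter.mp he').2),
      Finset.sum_const, Nat.card_eq_fintype_card, Fintype.card_subtype, smul_eq_mul, mul_comm]
  rw [← hsum]
  simp only [← Finset.filter_filter, Finset.sum_filter (fun e => fE e = Sum.inl _)]
  rw [Finset.sum_comm]
  refine Finset.sum_congr rfl fun e he => ?_
  have hve : v ∈ ends e := (Finset.mem_filter.mp he).2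
  rcases hfe : fE e with e₀ | v'
  · have hmem : fV v ∈ ends' e₀ := by
      rw [hmorE e e₀ hfe]
      exact Sym2.mem_map.mpr ⟨v, hve, rfl⟩
    simp [hmem]
  · simp [hU2 e v' hfe]

/-- **Riemann–Hurwitz for vertex-weighted metric graphs, divisor form.**
For a pseudo-harmonic morphism `φ : (Γ, w) → (Γ', w')` of loopless vertex-weighted
metric graphs with slopes `U` and multiplicities `M`:
`K_{(Γ,w)} = φ*(K_{(Γ',w')}) + R_φ`, where all divisors are supported on vertices,
`K_{(Γ,w)}(v) = val v − 2 + 2 w v`, `(φ* K')(v) = M v · K'(φ v)` and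
`R_φ(v) = 2(M v − 1 + w v − M v · w'(φ v)) − Σ_{e ∈ E_v} (U e − 1)`. -/
theorem riemann_hurwitz_divisor_vertex_weighted_metric_graphs
    (V E V' E' : Type) [Fintype V] [Fintype E] [Fintype V'] [Fintype E']
    (w : V → ℕ) (w' : V' → ℕ)
    (ends : E → Sym2 V) (ends' : E' → Sym2 V')
    (len : E → ℝ) (len' : E' → ℝ)
    (hlen : ∀ e, 0 < len e) (hlen' : ∀ e', 0 < len' e')
    (hloopless : ∀ e, ¬ (ends e).IsDiag)
    (hloopless' : ∀ e', ¬ (ends' e').IsDiag)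
    (hconn : (SimpleGraph.fromRel (fun u v => ∃ e, ends e = s(u, v))).Connected)
    (hconn' : (SimpleGraph.fromRel (fun u v => ∃ e', ends' e' = s(u, v))).Connected)
    (fV : V → V') (fE : E → E' ⊕ V')
    (hmorE : ∀ e e', fE e = Sum.inl e' → ends' e' = (ends e).map fV)
    (hmorV : ∀ e v', fE e = Sum.inr v' → (ends e).map fV = s(v', v'))
    (U : E → ℕ)
    (hU1 : ∀ e e', fE e = Sum.inl e' → (U e : ℝ) = len' e' / len e)
    (hU2 : ∀ e v', fE e = Sum.inr v' → U e = 0)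
    (M : V → ℕ)
    (hharm : ∀ v e', fV v ∈ ends' e' →
      (∑ e ∈ Finset.univ.filter (fun e => v ∈ ends e ∧ fE e = Sum.inl e'), U e) = M v)
    (d : ℕ)
    (hdeg : ∀ e', (∑ e ∈ Finset.univ.filter (fun e => fE e = Sum.inl e'), U e) = d)
    (hd0 : IsEmpty E' → d = 0)
    :
    (fun v : V => (Nat.card {e : E // v ∈ ends e} : ℤ) - 2 + 2 * (w v : ℤ)) =
      (fun v : V =>
        (M v : ℤ) * ((Nat.card {e' : E' // fV v ∈ ends' e'} : ℤ) - 2 + 2 * (w' (fV v) : ℤ))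
          + (2 * ((M v : ℤ) - 1 + (w v : ℤ) - (M v : ℤ) * (w' (fV v) : ℤ))
            - ∑ e ∈ Finset.univ.filter (fun e => v ∈ ends e), ((U e : ℤ) - 1))) := by
  funext v
  have key := sum_slope_eq_mul_card ends ends' fV fE hmorE U hU2 M hharm v
  have hcard : (Nat.card {e : E // v ∈ ends e} : ℤ) =
      ((Finset.univ.filter (fun e => v ∈ ends e)).card : ℤ) := by
    rw [Nat.card_eq_fintype_card, Fintype.card_subtype]
  have keyZ : ∑ e ∈ Finset.univ.filter (fun e => v ∈ ends e), (U e : ℤ) =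
      (M v : ℤ) * (Nat.card {e' : E' // fV v ∈ ends' e'} : ℤ) := by
    exact_mod_cast key
  rw [Finset.sum_sub_distrib, keyZ, hcard, Finset.sum_const, nsmul_eq_mul]
  ring
end
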